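/- Fix an integer n ≥ 2, a probability space (Ω, 𝔽, ℙ), and τ ≥ 0. Let B : Ω → Matrix (Fin n) (Fin n) ℝ be a random matrix whose law is a centered Gaussian measure on the space of n×n real matrices and such that: (B0) tr B = 0 almost surely; (B1) for every orthogonal matrix O the matrix O B Oᵀ has the same law as B; (B2) E[B·B] = 0 entrywise; (B3) E[Bᵀ·B] = τ·Id entrywise. Write B_sym = (B + Bᵀ)/2 and B_skew = (B − Bᵀ)/2. Then B_sym and B_skew are independent random matrices, and E[B_sym·B_sym] = (τ/2)·Id while E[B_skew·B_skew] = −(τ/2)·Id. -/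

import Mathlib

open MeasureTheory ProbabilityTheory Matrix

instance matrixMeasurableSpace (m k : Type*) :
    MeasurableSpace (Matrix m k ℝ) :=
  inferInstanceAs (MeasurableSpace (m → k → ℝ))

/-!
Write `S` and `A` for the symmetric and skew parts of `B`. Conjugation by the reflection in a
coordinate negates every product `S i j * A k l` whose indices contain that coordinate an odd number
of times. Up to the symmetries of `S` and `A`, the only nonzero products without such a coordinate
are `S k l * A k l` with `k ≠ l`, which change sign when the coordinates `k` and `l` are exchanged.
Invariance of the law under these conjugations therefore makes `S` and `A` uncorrelated, hence
independent by joint Gaussianity. The second moments follow from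
`B * B + Bᵀ * B = 2 * S * (S + A)` and `B * B - Bᵀ * B = 2 * A * (S + A)`, where the mixed terms
have mean zero.
-/

section Parts

variable {ι K : Type*} [Fintype ι] [DecidableEq ι]

/-- The symmetric part `(M + Mᵀ) / 2` of a square matrix, as a linear map. The division is by the
matrix `2`, so the value is junk unless `2` is invertible in `K`. -/
noncomputable def symPart [CommRing K] : Matrix ι ι K →ₗ[K] Matrix ι ι K where
  toFun M := (M + Mᵀ) / 2
  map_add' M N := by simp only [div_eq_mul_inv, transpose_add, add_mul]; abel
  map_smul' c M := by simp [div_eq_mul_inv, add_mul]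

/-- The skew-symmetric part `(M - Mᵀ) / 2` of a square matrix, as a linear map, with the same
convention on division as in `symPart`. -/
noncomputable def skewPart [CommRing K] : Matrix ι ι K →ₗ[K] Matrix ι ι K where
  toFun M := (M - Mᵀ) / 2
  map_add' M N := by simp only [div_eq_mul_inv, transpose_add, add_mul, sub_mul]; abel
  map_smul' c M := by simp [div_eq_mul_inv, sub_mul, smul_sub]

/-- The matrix of the reflection negating the coordinate `m` and fixing all others. -/
def coordReflection (K : Type*) [CommRing K] (m : ι) : Matrix ι ι K :=
  diagonal (Function.update 1 m (-1))

section CommRing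

variable [CommRing K]

lemma coordReflection_transpose_mul_self (m : ι) :
    (coordReflection K m)ᵀ * coordReflection K m = 1 := by
  rw [coordReflection, diagonal_transpose, diagonal_mul_diagonal, diagonal_eq_one]
  ext i
  by_cases him : i = m <;> simp [him]

lemma coordReflection_conj_apply (m : ι) (M : Matrix ι ι K) (i j : ι) :
    (coordReflection K m * M * (coordReflection K m)ᵀ) i j =
      (Function.update 1 m (-1) : ι → K) i * M i j * (Function.update 1 m (-1) : ι → K) j := by
  simp only [coordReflection, diagonal_transpose, diagonal_mul, mul_diagonal]

lemma swap_transpose_mul_self (k l : ι) :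
    (Matrix.swap K k l)ᵀ * Matrix.swap K k l = 1 := by
  rw [transpose_swap, swap_mul_self]

end CommRing

variable [Field K] [NeZero (2 : K)]

lemma matrix_div_two (M : Matrix ι ι K) : M / 2 = (2⁻¹ : K) • M := by
  have htwo : (2 : Matrix ι ι K) = (2 : K) • 1 := by rw [two_smul, one_add_one_eq_two]
  have hinv : (2 : Matrix ι ι K)⁻¹ = (2⁻¹ : K) • 1 := inv_eq_right_inv <| by
    rw [htwo, smul_mul_smul_comm, mul_inv_cancel₀ two_ne_zero, one_smul, one_mul]
  rw [div_eq_mul_inv, hinv, mul_smul_comm, mul_one]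

lemma symPart_eq_smul (M : Matrix ι ι K) : symPart M = (2⁻¹ : K) • (M + Mᵀ) := matrix_div_two _

lemma skewPart_eq_smul (M : Matrix ι ι K) : skewPart M = (2⁻¹ : K) • (M - Mᵀ) := matrix_div_two _

lemma symPart_apply_comm (M : Matrix ι ι K) (i j : ι) : symPart M j i = symPart M i j := by
  simp [symPart_eq_smul, add_comm]

lemma skewPart_apply_comm (M : Matrix ι ι K) (i j : ι) : skewPart M j i = -skewPart M i j := by
  simp [skewPart_eq_smul, ← mul_neg]

lemma skewPart_apply_self (M : Matrix ι ι K) (i : ι) : skewPart M i i = 0 := by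
  simp [skewPart_eq_smul]

lemma symPart_conj (O M : Matrix ι ι K) : symPart (O * M * Oᵀ) = O * symPart M * Oᵀ := by
  simp [symPart_eq_smul, mul_add, add_mul, mul_assoc]

lemma skewPart_conj (O M : Matrix ι ι K) : skewPart (O * M * Oᵀ) = O * skewPart M * Oᵀ := by
  simp [skewPart_eq_smul, mul_sub, sub_mul, mul_assoc]

lemma symPart_add_skewPart (M : Matrix ι ι K) : symPart M + skewPart M = M := by
  rw [symPart_eq_smul, skewPart_eq_smul, ← smul_add, add_add_sub_cancel, ← two_smul K M,
    inv_smul_smul₀ two_ne_zero]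

lemma symPart_mul_self (M : Matrix ι ι K) :
    symPart M * symPart M = (2⁻¹ : K) • (M * M + Mᵀ * M) - symPart M * skewPart M := by
  rw [eq_sub_iff_add_eq, ← mul_add, symPart_add_skewPart, symPart_eq_smul, smul_mul_assoc, add_mul]

lemma skewPart_mul_self (M : Matrix ι ι K) :
    skewPart M * skewPart M = (2⁻¹ : K) • (M * M - Mᵀ * M) - skewPart M * symPart M := by
  rw [eq_sub_iff_add_eq, ← mul_add, add_comm, symPart_add_skewPart, skewPart_eq_smul,
    smul_mul_assoc, sub_mul]

lemma symPart_mul_skewPart_coordReflection_conj {m i j k l : ι} (hi : i ≠ m) (hj : j ≠ m)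
    (hkl : Xor (k = m) (l = m)) (M : Matrix ι ι K) :
    symPart (coordReflection K m * M * (coordReflection K m)ᵀ) i j *
      skewPart (coordReflection K m * M * (coordReflection K m)ᵀ) k l =
    -(symPart M i j * skewPart M k l) := by
  rw [symPart_conj, skewPart_conj, coordReflection_conj_apply, coordReflection_conj_apply]
  rcases hkl with ⟨hk, hl⟩ | ⟨hl, hk⟩ <;> simp [hi, hj, hk, hl]

lemma symPart_swap_conj_apply (k l : ι) (M : Matrix ι ι K) :
    symPart (Matrix.swap K k l * M * (Matrix.swap K k l)ᵀ) k l = symPart M k l := by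
  rw [symPart_conj, transpose_swap, mul_swap_apply_right, swap_mul_apply_left, symPart_apply_comm]

lemma skewPart_swap_conj_apply (k l : ι) (M : Matrix ι ι K) :
    skewPart (Matrix.swap K k l * M * (Matrix.swap K k l)ᵀ) k l = -skewPart M k l := by
  rw [skewPart_conj, transpose_swap, mul_swap_apply_right, swap_mul_apply_left, skewPart_apply_comm]

end Parts

section RandomMatrix

instance matrixBorelSpace (m k : Type*) [Countable m] [Countable k] :
    BorelSpace (Matrix m k ℝ) :=
  inferInstanceAs (BorelSpace (m → k → ℝ))

instance matrixSecondCountableTopology (m k : Type*) [Countable m] [Countable k] :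
    SecondCountableTopology (Matrix m k ℝ) :=
  inferInstanceAs (SecondCountableTopology (m → k → ℝ))

lemma hasGaussianLaw_of_map_linearMap_eq_gaussianReal {Ω E : Type*} {_ : MeasurableSpace Ω}
    {μ : Measure Ω} [TopologicalSpace E] [AddCommMonoid E] [Module ℝ E] [MeasurableSpace E]
    [OpensMeasurableSpace E] {X : Ω → E} (hX : AEMeasurable X μ)
    (h : ∀ ℓ : E →ₗ[ℝ] ℝ, ∃ (m : ℝ) (v : NNReal), μ.map (fun ω => ℓ (X ω)) = gaussianReal m v) :
    HasGaussianLaw X μ where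
  isGaussian_map := isGaussian_of_map_eq_gaussianReal fun L => by
    obtain ⟨m, v, hL⟩ := h L
    exact ⟨m, v, by rw [← hL, AEMeasurable.map_map_of_aemeasurable (by fun_prop) hX]; rfl⟩

lemma hasGaussianLaw_linearMap_comp {Ω E F : Type*} {_ : MeasurableSpace Ω} {μ : Measure Ω}
    [TopologicalSpace E] [AddCommGroup E] [Module ℝ E] [IsTopologicalAddGroup E]
    [ContinuousSMul ℝ E] [T2Space E] [FiniteDimensional ℝ E]
    [MeasurableSpace E] [OpensMeasurableSpace E]
    [TopologicalSpace F] [AddCommGroup F] [Module ℝ F] [IsTopologicalAddGroup F]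
    [ContinuousSMul ℝ F] [MeasurableSpace F] [BorelSpace F]
    {X : Ω → E} (hX : HasGaussianLaw X μ) (T : E →ₗ[ℝ] F) :
    HasGaussianLaw (fun ω => T (X ω)) μ :=
  hX.map_of_measurable T.toContinuousLinearMap T.toContinuousLinearMap.continuous.measurable

variable {Ω l m n p : Type*} {_ : MeasurableSpace Ω} {μ : Measure Ω}

lemma memLp_two_apply_of_hasGaussianLaw [Finite l] [Finite m] {X : Ω → Matrix l m ℝ}
    (hX : HasGaussianLaw X μ) (i : l) (j : m) : MemLp (fun ω => X ω i j) 2 μ :=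
  (hasGaussianLaw_linearMap_comp hX (entryLinearMap ℝ ℝ i j)).memLp_two

lemma indepFun_matrix_of_covariance_apply_eq_zero [Finite l] [Finite m] [Finite n] [Finite p]
    {X : Ω → Matrix l m ℝ} {Y : Ω → Matrix n p ℝ} (hXY : HasGaussianLaw (fun ω => (X ω, Y ω)) μ)
    (hcov : ∀ i j i' j', cov[fun ω => X ω i j, fun ω => Y ω i' j'; μ] = 0) :
    IndepFun X Y μ := by
  have hentries := hasGaussianLaw_linearMap_comp hXY <| LinearMap.prodMap
    (LinearMap.pi fun q : l × m => entryLinearMap ℝ ℝ q.1 q.2)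
    (LinearMap.pi fun q : n × p => entryLinearMap ℝ ℝ q.1 q.2)
  exact (hentries.indepFun_of_covariance_eval fun q q' => hcov q.1 q.2 q'.1 q'.2).comp
    measurable_curry measurable_curry

section Product

variable [Fintype m] {X : Ω → Matrix l m ℝ} {Y : Ω → Matrix m n ℝ}

lemma integrable_matrix_mul_apply (hX : ∀ i k, MemLp (fun ω => X ω i k) 2 μ)
    (hY : ∀ k j, MemLp (fun ω => Y ω k j) 2 μ) (i : l) (j : n) :
    Integrable (fun ω => (X ω * Y ω) i j) μ := by
  simp only [mul_apply]
  exact integrable_finsetSum _ fun k _ => (hX i k).integrable_mul (hY k j)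

lemma integral_matrix_mul_apply (hX : ∀ i k, MemLp (fun ω => X ω i k) 2 μ)
    (hY : ∀ k j, MemLp (fun ω => Y ω k j) 2 μ) (i : l) (j : n) :
    ∫ ω, (X ω * Y ω) i j ∂μ = ∑ k, ∫ ω, X ω i k * Y ω k j ∂μ := by
  simp only [mul_apply]
  exact integral_finsetSum _ fun k _ => (hX i k).integrable_mul (hY k j)

end Product

lemma integral_eq_zero_of_comp_eq_neg {α F : Type*} [MeasurableSpace α] [NormedAddCommGroup F]
    [NormedSpace ℝ F] {ν : Measure α} {T : α → α} {f : α → F} (hT : MeasurePreserving T ν ν)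
    (hf : AEStronglyMeasurable f ν) (hodd : ∀ x, f (T x) = -f x) : ∫ x, f x ∂ν = 0 := by
  have hneg : ∫ x, f x ∂ν = -∫ x, f x ∂ν := by
    calc ∫ x, f x ∂ν = ∫ x, f (T x) ∂ν := by
          conv_lhs => rw [← hT.map_eq]
          exact integral_map hT.aemeasurable (by rwa [hT.map_eq])
      _ = -∫ x, f x ∂ν := by simp only [hodd, integral_neg]
  have : IsAddTorsionFree F := .of_isTorsionFree ℝ F
  exact self_eq_neg.mp hneg

variable {ι : Type*} [Fintype ι] {B : Ω → Matrix ι ι ℝ} {O : Matrix ι ι ℝ}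

/-- The law of the random matrix `B` under `μ` is unchanged by the congruence `M ↦ O * M * Oᵀ`,
which for orthogonal `O` is conjugation by `O`. -/
def IsConjInvariant (B : Ω → Matrix ι ι ℝ) (μ : Measure Ω) (O : Matrix ι ι ℝ) : Prop :=
  μ.map (fun ω => O * B ω * Oᵀ) = μ.map B

lemma IsConjInvariant.measurePreserving (hO : IsConjInvariant B μ O) (hB : AEMeasurable B μ) :
    MeasurePreserving (fun M => O * M * Oᵀ) (μ.map B) (μ.map B) where
  measurable := Continuous.measurable (by fun_prop)
  map_eq := by
    rw [AEMeasurable.map_map_of_aemeasurable (Continuous.aemeasurable (by fun_prop)) hB]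
    exact hO

lemma IsConjInvariant.integral_eq_zero_of_odd {f : Matrix ι ι ℝ → ℝ}
    (hO : IsConjInvariant B μ O) (hB : AEMeasurable B μ) (hf : Continuous f)
    (hodd : ∀ M, f (O * M * Oᵀ) = -f M) : ∫ ω, f (B ω) ∂μ = 0 := by
  rw [← integral_map hB hf.aestronglyMeasurable]
  exact integral_eq_zero_of_comp_eq_neg (hO.measurePreserving hB) hf.aestronglyMeasurable hodd

variable [DecidableEq ι]

@[fun_prop]
lemma continuous_symPart : Continuous (symPart : Matrix ι ι ℝ →ₗ[ℝ] Matrix ι ι ℝ) :=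
  LinearMap.continuous_of_finiteDimensional _

@[fun_prop]
lemma continuous_skewPart : Continuous (skewPart : Matrix ι ι ℝ →ₗ[ℝ] Matrix ι ι ℝ) :=
  LinearMap.continuous_of_finiteDimensional _

lemma integral_skewPart_apply_eq_zero (hB : AEMeasurable B μ)
    (hswap : ∀ k l, IsConjInvariant B μ (Matrix.swap ℝ k l)) (k l : ι) :
    ∫ ω, skewPart (B ω) k l ∂μ = 0 :=
  (hswap k l).integral_eq_zero_of_odd (f := fun M => skewPart M k l) hB (by fun_prop)
    (skewPart_swap_conj_apply k l)

lemma integral_symPart_mul_skewPart_apply_eq_zero (hB : AEMeasurable B μ)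
    (hreflection : ∀ m, IsConjInvariant B μ (coordReflection ℝ m))
    (hswap : ∀ k l, IsConjInvariant B μ (Matrix.swap ℝ k l)) (i j k l : ι) :
    ∫ ω, symPart (B ω) i j * skewPart (B ω) k l ∂μ = 0 := by
  rcases eq_or_ne k l with rfl | hkl
  · simp only [skewPart_apply_self, mul_zero, integral_zero]
  have vanish_of_reflection (m : ι) (hi : i ≠ m) (hj : j ≠ m) (hm : Xor (k = m) (l = m)) :
      ∫ ω, symPart (B ω) i j * skewPart (B ω) k l ∂μ = 0 :=
    (hreflection m).integral_eq_zero_of_odd (f := fun M => symPart M i j * skewPart M k l) hB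
      (by fun_prop) (symPart_mul_skewPart_coordReflection_conj hi hj hm)
  have vanish_of_swap : ∫ ω, symPart (B ω) k l * skewPart (B ω) k l ∂μ = 0 :=
    (hswap k l).integral_eq_zero_of_odd (f := fun M => symPart M k l * skewPart M k l) hB
      (by fun_prop) fun M => by
        rw [symPart_swap_conj_apply, skewPart_swap_conj_apply, mul_neg]
  by_cases hk : i ≠ k ∧ j ≠ k
  · exact vanish_of_reflection k hk.1 hk.2 (.inl ⟨rfl, hkl.symm⟩)
  by_cases hl : i ≠ l ∧ j ≠ l
  · exact vanish_of_reflection l hl.1 hl.2 (.inr ⟨rfl, hkl⟩)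
  obtain ⟨rfl, rfl⟩ | ⟨rfl, rfl⟩ : (i = k ∧ j = l) ∨ (i = l ∧ j = k) := by grind
  · exact vanish_of_swap
  · simpa only [symPart_apply_comm] using vanish_of_swap

lemma memLp_symPart_apply {p : ENNReal} (hB : ∀ i j, MemLp (fun ω => B ω i j) p μ) (i j : ι) :
    MemLp (fun ω => symPart (B ω) i j) p μ := by
  simp only [symPart_eq_smul]
  exact ((hB i j).add (hB j i)).const_mul _

lemma memLp_skewPart_apply {p : ENNReal} (hB : ∀ i j, MemLp (fun ω => B ω i j) p μ) (i j : ι) :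
    MemLp (fun ω => skewPart (B ω) i j) p μ := by
  simp only [skewPart_eq_smul]
  exact ((hB i j).sub (hB j i)).const_mul _

lemma indepFun_symPart_skewPart (hB : HasGaussianLaw B μ)
    (hreflection : ∀ m, IsConjInvariant B μ (coordReflection ℝ m))
    (hswap : ∀ k l, IsConjInvariant B μ (Matrix.swap ℝ k l)) :
    IndepFun (fun ω => symPart (B ω)) (fun ω => skewPart (B ω)) μ := by
  have := hB.isProbabilityMeasure
  have hL2 := memLp_two_apply_of_hasGaussianLaw hB
  refine indepFun_matrix_of_covariance_apply_eq_zero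
    (hasGaussianLaw_linearMap_comp hB (symPart.prod skewPart)) fun i j k l => ?_
  rw [covariance_eq_sub (memLp_symPart_apply hL2 i j) (memLp_skewPart_apply hL2 k l),
    integral_skewPart_apply_eq_zero hB.aemeasurable hswap, mul_zero, sub_zero]
  exact integral_symPart_mul_skewPart_apply_eq_zero hB.aemeasurable hreflection hswap i j k l

lemma integral_symPart_mul_self_apply (hB : ∀ i j, MemLp (fun ω => B ω i j) 2 μ)
    (huncorr : ∀ i j k l, ∫ ω, symPart (B ω) i j * skewPart (B ω) k l ∂μ = 0) (i j : ι) :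
    ∫ ω, (symPart (B ω) * symPart (B ω)) i j ∂μ =
      2⁻¹ * (∫ ω, (B ω * B ω) i j ∂μ + ∫ ω, ((B ω)ᵀ * B ω) i j ∂μ) := by
  have hBB := integrable_matrix_mul_apply hB hB i j
  have hBtB := integrable_matrix_mul_apply (X := fun ω => (B ω)ᵀ) (fun i j => hB j i) hB i j
  have hsum : Integrable (fun ω => (B ω * B ω) i j + ((B ω)ᵀ * B ω) i j) μ := hBB.add hBtB
  have hSA := integrable_matrix_mul_apply (memLp_symPart_apply hB) (memLp_skewPart_apply hB) i j
  have hmixed : ∫ ω, (symPart (B ω) * skewPart (B ω)) i j ∂μ = 0 := by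
    rw [integral_matrix_mul_apply (memLp_symPart_apply hB) (memLp_skewPart_apply hB)]
    exact Finset.sum_eq_zero fun k _ => huncorr i k k j
  simp only [symPart_mul_self, Matrix.sub_apply, Matrix.smul_apply, Matrix.add_apply, smul_eq_mul]
  rw [integral_sub (hsum.const_mul _) hSA, integral_const_mul, integral_add hBB hBtB,
    hmixed, sub_zero]

lemma integral_skewPart_mul_self_apply (hB : ∀ i j, MemLp (fun ω => B ω i j) 2 μ)
    (huncorr : ∀ i j k l, ∫ ω, symPart (B ω) i j * skewPart (B ω) k l ∂μ = 0) (i j : ι) :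
    ∫ ω, (skewPart (B ω) * skewPart (B ω)) i j ∂μ =
      2⁻¹ * (∫ ω, (B ω * B ω) i j ∂μ - ∫ ω, ((B ω)ᵀ * B ω) i j ∂μ) := by
  have hBB := integrable_matrix_mul_apply hB hB i j
  have hBtB := integrable_matrix_mul_apply (X := fun ω => (B ω)ᵀ) (fun i j => hB j i) hB i j
  have hdiff : Integrable (fun ω => (B ω * B ω) i j - ((B ω)ᵀ * B ω) i j) μ := hBB.sub hBtB
  have hAS := integrable_matrix_mul_apply (memLp_skewPart_apply hB) (memLp_symPart_apply hB) i j
  have hmixed : ∫ ω, (skewPart (B ω) * symPart (B ω)) i j ∂μ = 0 := by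
    rw [integral_matrix_mul_apply (memLp_skewPart_apply hB) (memLp_symPart_apply hB)]
    exact Finset.sum_eq_zero fun k _ => by simpa only [mul_comm] using huncorr k j i k
  simp only [skewPart_mul_self, Matrix.sub_apply, Matrix.smul_apply, smul_eq_mul]
  rw [integral_sub (hdiff.const_mul _) hAS, integral_const_mul, integral_sub hBB hBtB,
    hmixed, sub_zero]

end RandomMatrix

theorem sym_skew_independent_and_moments_general {ι Ω : Type*} [Fintype ι] [DecidableEq ι]
    {_ : MeasurableSpace Ω} {μ : Measure Ω} {τ : ℝ} {B : Ω → Matrix ι ι ℝ}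
    (hB : HasGaussianLaw B μ)
    (hreflection : ∀ m, IsConjInvariant B μ (coordReflection ℝ m))
    (hswap : ∀ k l, IsConjInvariant B μ (Matrix.swap ℝ k l))
    (hBB : ∀ i j, ∫ ω, (B ω * B ω) i j ∂μ = 0)
    (hBtB : ∀ i j, ∫ ω, ((B ω)ᵀ * B ω) i j ∂μ = τ * (1 : Matrix ι ι ℝ) i j) :
    IndepFun (fun ω => symPart (B ω)) (fun ω => skewPart (B ω)) μ
    ∧ (∀ i j, ∫ ω, (symPart (B ω) * symPart (B ω)) i j ∂μ = (τ / 2) * (1 : Matrix ι ι ℝ) i j)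
    ∧ (∀ i j, ∫ ω, (skewPart (B ω) * skewPart (B ω)) i j ∂μ =
        -(τ / 2) * (1 : Matrix ι ι ℝ) i j) := by
  have hL2 := memLp_two_apply_of_hasGaussianLaw hB
  have huncorr :=
    integral_symPart_mul_skewPart_apply_eq_zero hB.aemeasurable hreflection hswap
  refine ⟨indepFun_symPart_skewPart hB hreflection hswap, fun i j => ?_, fun i j => ?_⟩
  · rw [integral_symPart_mul_self_apply hL2 huncorr, hBB, hBtB]
    ring
  · rw [integral_skewPart_mul_self_apply hL2 huncorr, hBB, hBtB]
    ring

theorem sym_skew_independent_and_moments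
    (n : ℕ) (hn : 2 ≤ n)
    (Ω : Type*) [MeasureSpace Ω] [IsProbabilityMeasure (ℙ : Measure Ω)]
    (τ : ℝ) (hτ : 0 ≤ τ)
    (B : Ω → Matrix (Fin n) (Fin n) ℝ)
    (hmeas : Measurable B)
    -- the law of `B` is a centered Gaussian measure: every one-dimensional linear
    -- projection of it is a centered Gaussian distribution on `ℝ`
    (hGauss : ∀ ℓ : Matrix (Fin n) (Fin n) ℝ →ₗ[ℝ] ℝ, ∃ v : NNReal,
      Measure.map (fun ω => ℓ (B ω)) ℙ = gaussianReal 0 v)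
    (hB0 : ∀ᵐ ω ∂ℙ, (B ω).trace = 0)
    (hB1 : ∀ O : Matrix (Fin n) (Fin n) ℝ, Oᵀ * O = 1 →
      Measure.map (fun ω => O * B ω * Oᵀ) ℙ = Measure.map B ℙ)
    (hB2 : ∀ i j : Fin n, ∫ ω, (B ω * B ω) i j ∂ℙ = 0)
    (hB3 : ∀ i j : Fin n, ∫ ω, ((B ω)ᵀ * B ω) i j ∂ℙ = τ * (1 : Matrix (Fin n) (Fin n) ℝ) i j) :
    IndepFun (fun ω => (B ω + (B ω)ᵀ) / 2) (fun ω => (B ω - (B ω)ᵀ) / 2) ℙ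
    ∧ (∀ i j : Fin n, ∫ ω, (((B ω + (B ω)ᵀ) / 2) * ((B ω + (B ω)ᵀ) / 2)) i j ∂ℙ
        = (τ / 2) * (1 : Matrix (Fin n) (Fin n) ℝ) i j)
    ∧ (∀ i j : Fin n, ∫ ω, (((B ω - (B ω)ᵀ) / 2) * ((B ω - (B ω)ᵀ) / 2)) i j ∂ℙ
        = -(τ / 2) * (1 : Matrix (Fin n) (Fin n) ℝ) i j) :=
  sym_skew_independent_and_moments_general
    (hasGaussianLaw_of_map_linearMap_eq_gaussianReal hmeas.aemeasurable fun ℓ => ⟨0, hGauss ℓ⟩)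
    (fun m => hB1 _ (coordReflection_transpose_mul_self m))
    (fun k l => hB1 _ (swap_transpose_mul_self k l)) hB2 hB3
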